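/- Linear momentum of generalized asymptotically hyperboloidal data is independent of the generalized background (coordinate form of Theorem 6.4, momentum part). Let H : (0,∞) → ℝ be continuous with 0 < H(r) < 1 for all r > 0 and H(r) = 1 − 1/(2r²) + O(r⁻³) as r → ∞. Let A, U, W : S² → ℝ be continuous and let a, u, w : (0,∞) × S² → ℝ be continuous with, uniformly in ω ∈ S², a(r,ω) = A(ω) r⁻⁵ + O(r⁻⁶), u(r,ω) = U(ω) r⁻¹ + O(r⁻³), w(r,ω) = W(ω) r⁻¹ + O(r⁻³). Then for every vector e ∈ ℝ³, lim_{r→∞} ∫_{S²} r² [ 2 a(r,ω) / ( r (1−H(r)²)² ) + ( (2 − H(r)²) / ( r³ (1−H(r)²) ) + 2 H(r) / ( r² √(1−H(r)²) ) ) u(r,ω) + ( 2 H(r) / ( r² √(1−H(r)²) ) ) w(r,ω) ] ⟨ω, e⟩ dA(ω) = ∫_{S²} ( 2A(ω) + 3U(ω) + 2W(ω) ) ⟨ω, e⟩ dA(ω). -/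

import Mathlib

open MeasureTheory Filter Real RealInnerProductSpace

noncomputable section

/-- Euclidean 3-space. -/
abbrev E3 := EuclideanSpace ℝ (Fin 3)

/-- The unit sphere `S²` in Euclidean `ℝ³`. -/
abbrev S2 := Metric.sphere (0 : E3) 1

/-- The surface (Riemannian area) measure on `S²`, with total area `4π`. -/
noncomputable def sphereMeasure : Measure S2 := Measure.toSphere (volume : Measure E3)

/-! With `q = r² (1 - H²)`, the charge density equals
`2 / q² · (r⁵ a) + ((2 - H²) / q + 2 H / √q) · (r u) + 2 H / √q · (r w)`.
The background thus enters only through `H` and `q`, and every admissible `H` gives `H → 1` and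
`q → 1`, so that the three coefficients tend to `2`, `3`, `2`. The rescaled fields `r⁵ a`, `r u`,
`r w` converge uniformly on the sphere to `A`, `U`, `W`, which lets the limit pass through the
integral. -/

open scoped Topology

section Convergence

variable {ι X E : Type*} [NormedAddCommGroup E] [NormedSpace ℝ E] {l : Filter ι}

theorem eventually_norm_smul_le_of_tendstoUniformly {F : ι → X → ℝ} {f : X → ℝ}
    (hF : TendstoUniformly F f l) (g : X → E) :
    ∀ᶠ i in l, ∀ x, ‖F i x • g x‖ ≤ ‖g x‖ + ‖f x • g x‖ := by
  filter_upwards [Metric.tendstoUniformly_iff.1 hF 1 one_pos] with i hi x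
  have hclose : ‖F i x - f x‖ ≤ 1 := by simpa [dist_eq_norm, norm_sub_rev] using (hi x).le
  calc ‖F i x • g x‖ = ‖(F i x - f x) • g x + f x • g x‖ := by rw [← add_smul, sub_add_cancel]
    _ ≤ ‖(F i x - f x) • g x‖ + ‖f x • g x‖ := norm_add_le _ _
    _ ≤ ‖g x‖ + ‖f x • g x‖ := by
      rw [norm_smul]
      gcongr
      exact mul_le_of_le_one_left (norm_nonneg _) hclose

variable [MeasurableSpace X] {μ : Measure X}

/-- Integrable convergence along `l`: the limit and eventually all members of the family are
integrable, and their integrals converge. Carrying integrability along makes the notion stable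
under sums, which convergence of the (possibly junk) integrals alone is not. -/
structure TendstoIntegral (F : ι → X → E) (f : X → E) (l : Filter ι) (μ : Measure X) : Prop where
  integrable : Integrable f μ
  eventually_integrable : ∀ᶠ i in l, Integrable (F i) μ
  tendsto : Tendsto (fun i => ∫ x, F i x ∂μ) l (𝓝 (∫ x, f x ∂μ))

namespace TendstoIntegral

variable {F G : ι → X → E} {f g : X → E}

theorem add (hF : TendstoIntegral F f l μ) (hG : TendstoIntegral G g l μ) :
    TendstoIntegral (fun i x => F i x + G i x) (fun x => f x + g x) l μ where
  integrable := hF.integrable.add hG.integrable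
  eventually_integrable := by
    filter_upwards [hF.eventually_integrable, hG.eventually_integrable] with i hFi hGi
    exact hFi.add hGi
  tendsto := by
    rw [integral_add hF.integrable hG.integrable]
    refine (hF.tendsto.add hG.tendsto).congr' ?_
    filter_upwards [hF.eventually_integrable, hG.eventually_integrable] with i hFi hGi
    exact (integral_add hFi hGi).symm

theorem smul (hF : TendstoIntegral F f l μ) {c : ι → ℝ} {b : ℝ} (hc : Tendsto c l (𝓝 b)) :
    TendstoIntegral (fun i x => c i • F i x) (fun x => b • f x) l μ where
  integrable := hF.integrable.smul b
  eventually_integrable := hF.eventually_integrable.mono fun i hFi => hFi.smul (c i)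
  tendsto := by simpa only [integral_smul] using hc.smul hF.tendsto

end TendstoIntegral

theorem tendstoIntegral_smul_of_tendstoUniformly [l.IsCountablyGenerated] {F : ι → X → ℝ}
    {f : X → ℝ} {g : X → E} (hF : TendstoUniformly F f l)
    (hF_meas : ∀ᶠ i in l, AEStronglyMeasurable (F i) μ)
    (hg : Integrable g μ) (hfg : Integrable (fun x => f x • g x) μ) :
    TendstoIntegral (fun i x => F i x • g x) (fun x => f x • g x) l μ := by
  have hbound := eventually_norm_smul_le_of_tendstoUniformly hF g
  have hbound_int : Integrable (fun x => ‖g x‖ + ‖f x • g x‖) μ := hg.norm.add hfg.norm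
  have hmeas : ∀ᶠ i in l, AEStronglyMeasurable (fun x => F i x • g x) μ :=
    hF_meas.mono fun i hi => hi.smul hg.aestronglyMeasurable
  refine ⟨hfg, ?_, ?_⟩
  · filter_upwards [hmeas, hbound] with i hi hle
    exact hbound_int.mono' hi (ae_of_all _ hle)
  · exact tendsto_integral_filter_of_dominated_convergence _ hmeas
      (hbound.mono fun i hle => ae_of_all _ hle) hbound_int
      (ae_of_all _ fun x => (hF.tendsto_at x).smul_const (g x))

end Convergence

theorem tendstoUniformly_pow_mul_of_abs_sub_div_pow_le {X : Type*} {f : ℝ → X → ℝ} {F : X → ℝ}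
    {C : ℝ} {k m : ℕ} (hkm : k < m)
    (h : ∀ᶠ r in atTop, ∀ x, |f r x - F x / r ^ k| ≤ C / r ^ m) :
    TendstoUniformly (fun r x => r ^ k * f r x) F atTop := by
  have hlim : Tendsto (fun r : ℝ => C * (r ^ k / r ^ m)) atTop (𝓝 0) := by
    simpa using (tendsto_pow_div_pow_atTop_zero hkm).const_mul C
  refine Metric.tendstoUniformly_iff.2 fun ε hε => ?_
  filter_upwards [h, hlim.eventually_lt_const hε, eventually_gt_atTop 0] with r hr hrε hr0 x
  calc dist (F x) (r ^ k * f r x) = r ^ k * |f r x - F x / r ^ k| := by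
        rw [dist_comm, Real.dist_eq, ← abs_of_pos (pow_pos hr0 k), ← abs_mul,
          abs_of_pos (pow_pos hr0 k), mul_sub, mul_div_cancel₀ _ (pow_pos hr0 k).ne']
    _ ≤ r ^ k * (C / r ^ m) := by gcongr; exact hr x
    _ = C * (r ^ k / r ^ m) := by ring
    _ < ε := hrε

theorem tendstoUniformly_mul_of_abs_sub_div_le {X : Type*} {f : ℝ → X → ℝ} {F : X → ℝ}
    {C : ℝ} {m : ℕ} (hm : 1 < m)
    (h : ∀ᶠ r in atTop, ∀ x, |f r x - F x / r| ≤ C / r ^ m) :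
    TendstoUniformly (fun r x => r * f r x) F atTop := by
  simpa using tendstoUniformly_pow_mul_of_abs_sub_div_pow_le hm (by simpa using h)

section HeightFunction

variable {H : ℝ → ℝ} {c : ℝ}

theorem tendsto_one_of_tendsto_sq_mul_one_sub
    (hH : Tendsto (fun r => r ^ 2 * (1 - H r)) atTop (𝓝 c)) : Tendsto H atTop (𝓝 1) := by
  have hdiff : Tendsto (fun r => 1 - r ^ 2 * (1 - H r) / r ^ 2) atTop (𝓝 1) := by
    simpa using (hH.div_atTop (tendsto_pow_atTop two_ne_zero)).const_sub 1
  refine hdiff.congr' ?_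
  filter_upwards [eventually_ne_atTop 0] with r hr
  rw [mul_div_cancel_left₀ _ (pow_ne_zero 2 hr), sub_sub_cancel]

theorem tendsto_sq_mul_one_sub_sq
    (hH : Tendsto (fun r => r ^ 2 * (1 - H r)) atTop (𝓝 c)) :
    Tendsto (fun r => r ^ 2 * (1 - H r ^ 2)) atTop (𝓝 (2 * c)) := by
  have hprod := hH.mul ((tendsto_one_of_tendsto_sq_mul_one_sub hH).const_add 1)
  rw [one_add_one_eq_two, mul_comm c 2] at hprod
  exact hprod.congr fun r => by ring

theorem tendsto_sq_mul_one_sub_of_abs_sub_le {C : ℝ}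
    (hH : ∀ᶠ r in atTop, |H r - (1 - 1 / (2 * r ^ 2))| ≤ C / r ^ 3) :
    Tendsto (fun r => r ^ 2 * (1 - H r)) atTop (𝓝 (1 / 2)) := by
  refine (tendstoUniformly_pow_mul_of_abs_sub_div_pow_le (f := fun r (_ : Unit) => 1 - H r)
    (F := fun _ => 1 / 2) (C := C) (by norm_num : 2 < 3) (hH.mono fun r hr _ => ?_)).tendsto_at ()
  rwa [show 1 - H r - 1 / 2 / r ^ 2 = -(H r - (1 - 1 / (2 * r ^ 2))) by ring, abs_neg]

end HeightFunction

/-- The integrand of the linear momentum on the coordinate sphere of radius `r`, without the weight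
`⟨ω, e⟩`, as a function of the value `h = H(r)` and of the components `a = ġ_rr`,
`u = σ^{αβ} ġ_{αβ}`, `w = σ^{αβ} p_{αβ}` of the perturbation. -/
def momentumDensity (r h a u w : ℝ) : ℝ :=
  r ^ 2 * (2 * a / (r * (1 - h ^ 2) ^ 2)
    + ((2 - h ^ 2) / (r ^ 3 * (1 - h ^ 2)) + 2 * h / (r ^ 2 * √(1 - h ^ 2))) * u
    + (2 * h / (r ^ 2 * √(1 - h ^ 2))) * w)

theorem momentumDensity_eq_rescaled {r : ℝ} (hr : 0 < r) (h a u w : ℝ) :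
    momentumDensity r h a u w =
      2 / (r ^ 2 * (1 - h ^ 2)) ^ 2 * (r ^ 5 * a)
        + ((2 - h ^ 2) / (r ^ 2 * (1 - h ^ 2)) + 2 * h / √(r ^ 2 * (1 - h ^ 2))) * (r * u)
        + 2 * h / √(r ^ 2 * (1 - h ^ 2)) * (r * w) := by
  have hsqrt : √(r ^ 2 * (1 - h ^ 2)) = r * √(1 - h ^ 2) := by
    rw [Real.sqrt_mul (sq_nonneg r), Real.sqrt_sq hr.le]
  rw [momentumDensity, hsqrt]
  simp only [div_eq_mul_inv, mul_inv, mul_pow]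
  field_simp

instance : IsFiniteMeasure sphereMeasure :=
  inferInstanceAs (IsFiniteMeasure (Measure.toSphere (volume : Measure E3)))

theorem integrable_sphereMeasure_of_continuous {f : S2 → ℝ} (hf : Continuous f) :
    Integrable f sphereMeasure :=
  hf.integrable_of_hasCompactSupport (HasCompactSupport.of_compactSpace f)

theorem continuous_slice_of_continuousOn_uncurry {X Y Z : Type*} [TopologicalSpace X]
    [TopologicalSpace Y] [TopologicalSpace Z] {f : X → Y → Z} {s : Set X}
    (hf : ContinuousOn (Function.uncurry f) (s ×ˢ Set.univ)) {x : X} (hx : x ∈ s) :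
    Continuous (f x) :=
  hf.comp_continuous (by fun_prop : Continuous (Prod.mk x)) fun _ => ⟨hx, trivial⟩

theorem eventually_aestronglyMeasurable_sphereMeasure {f : ℝ → S2 → ℝ}
    (hf : ContinuousOn (Function.uncurry f) (Set.Ioi (0 : ℝ) ×ˢ Set.univ)) :
    ∀ᶠ r in atTop, AEStronglyMeasurable (f r) sphereMeasure :=
  (eventually_gt_atTop 0).mono fun _ hr =>
    (continuous_slice_of_continuousOn_uncurry hf hr).aestronglyMeasurable

theorem generalized_momentum_charge_limit_general {X E : Type*} [MeasurableSpace X]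
    {μ : Measure X} [NormedAddCommGroup E] [NormedSpace ℝ E] {H : ℝ → ℝ}
    (hH : Tendsto (fun r => r ^ 2 * (1 - H r)) atTop (𝓝 (1 / 2)))
    {A U W : X → ℝ} {a u w : ℝ → X → ℝ} {g : X → E}
    (ha : TendstoUniformly (fun r x => r ^ 5 * a r x) A atTop)
    (hu : TendstoUniformly (fun r x => r * u r x) U atTop)
    (hw : TendstoUniformly (fun r x => r * w r x) W atTop)
    (ha_meas : ∀ᶠ r in atTop, AEStronglyMeasurable (a r) μ)
    (hu_meas : ∀ᶠ r in atTop, AEStronglyMeasurable (u r) μ)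
    (hw_meas : ∀ᶠ r in atTop, AEStronglyMeasurable (w r) μ)
    (hg : Integrable g μ) (hA : Integrable (fun x => A x • g x) μ)
    (hU : Integrable (fun x => U x • g x) μ) (hW : Integrable (fun x => W x • g x) μ) :
    Tendsto (fun r => ∫ x, momentumDensity r (H r) (a r x) (u r x) (w r x) • g x ∂μ) atTop
      (𝓝 (∫ x, (2 * A x + 3 * U x + 2 * W x) • g x ∂μ)) := by
  have hH_one : Tendsto H atTop (𝓝 1) := tendsto_one_of_tendsto_sq_mul_one_sub hH
  have hq : Tendsto (fun r => r ^ 2 * (1 - H r ^ 2)) atTop (𝓝 1) := by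
    simpa using tendsto_sq_mul_one_sub_sq hH
  have ha_coeff : Tendsto (fun r => 2 / (r ^ 2 * (1 - H r ^ 2)) ^ 2) atTop (𝓝 2) := by
    simpa [div_eq_mul_inv] using ((hq.pow 2).inv₀ (by norm_num)).const_mul 2
  have hw_coeff : Tendsto (fun r => 2 * H r / √(r ^ 2 * (1 - H r ^ 2))) atTop (𝓝 2) := by
    simpa [div_eq_mul_inv] using (hH_one.const_mul 2).mul (hq.sqrt.inv₀ (by norm_num))
  have hu_coeff : Tendsto (fun r => (2 - H r ^ 2) / (r ^ 2 * (1 - H r ^ 2))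
      + 2 * H r / √(r ^ 2 * (1 - H r ^ 2))) atTop (𝓝 3) := by
    rw [show (3 : ℝ) = (2 - 1 ^ 2) / 1 + 2 by norm_num]
    exact (((hH_one.pow 2).const_sub 2).div hq one_ne_zero).add hw_coeff
  have ha_int := tendstoIntegral_smul_of_tendstoUniformly ha
    (ha_meas.mono fun r hr => hr.const_mul (r ^ 5)) hg hA
  have hu_int := tendstoIntegral_smul_of_tendstoUniformly hu
    (hu_meas.mono fun r hr => hr.const_mul r) hg hU
  have hw_int := tendstoIntegral_smul_of_tendstoUniformly hw
    (hw_meas.mono fun r hr => hr.const_mul r) hg hW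
  have hsum := (((ha_int.smul ha_coeff).add (hu_int.smul hu_coeff)).add
    (hw_int.smul hw_coeff)).tendsto
  simp only [← mul_smul, ← add_smul] at hsum
  refine hsum.congr' ?_
  filter_upwards [eventually_gt_atTop 0] with r hr
  simp only [momentumDensity_eq_rescaled hr]

/-- Linear momentum of generalized asymptotically hyperboloidal data is independent of the
generalized background (coordinate form of Theorem 6.4, momentum part). -/
theorem generalized_momentum_charge_limit
    (H : ℝ → ℝ) (hH_cont : ContinuousOn H (Set.Ioi (0 : ℝ)))
    (hH_bound : ∀ r > (0 : ℝ), 0 < H r ∧ H r < 1)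
    (hH_asymp : ∃ C > (0 : ℝ), ∃ R > (0 : ℝ), ∀ r ≥ R,
      |H r - (1 - 1 / (2 * r ^ 2))| ≤ C / r ^ 3)
    (A U W : S2 → ℝ) (hA : Continuous A) (hU : Continuous U) (hW : Continuous W)
    (a u w : ℝ → S2 → ℝ)
    (ha_cont : ContinuousOn (Function.uncurry a) (Set.Ioi (0 : ℝ) ×ˢ Set.univ))
    (hu_cont : ContinuousOn (Function.uncurry u) (Set.Ioi (0 : ℝ) ×ˢ Set.univ))
    (hw_cont : ContinuousOn (Function.uncurry w) (Set.Ioi (0 : ℝ) ×ˢ Set.univ))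
    (ha : ∃ C > (0 : ℝ), ∃ R > (0 : ℝ), ∀ r ≥ R, ∀ ω : S2,
      |a r ω - A ω / r ^ 5| ≤ C / r ^ 6)
    (hu : ∃ C > (0 : ℝ), ∃ R > (0 : ℝ), ∀ r ≥ R, ∀ ω : S2,
      |u r ω - U ω / r| ≤ C / r ^ 3)
    (hw : ∃ C > (0 : ℝ), ∃ R > (0 : ℝ), ∀ r ≥ R, ∀ ω : S2,
      |w r ω - W ω / r| ≤ C / r ^ 3)
    (e : E3) :
    Tendsto
      (fun r : ℝ => ∫ ω : S2,
        r ^ 2 * (2 * a r ω / (r * (1 - H r ^ 2) ^ 2)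
          + ((2 - H r ^ 2) / (r ^ 3 * (1 - H r ^ 2))
              + 2 * H r / (r ^ 2 * Real.sqrt (1 - H r ^ 2))) * u r ω
          + (2 * H r / (r ^ 2 * Real.sqrt (1 - H r ^ 2))) * w r ω)
          * ⟪(ω : E3), e⟫ ∂sphereMeasure)
      atTop
      (nhds (∫ ω : S2, (2 * A ω + 3 * U ω + 2 * W ω) * ⟪(ω : E3), e⟫ ∂sphereMeasure)) := by
  obtain ⟨CH, -, RH, -, hH⟩ := hH_asymp
  obtain ⟨Ca, -, Ra, -, ha⟩ := ha
  obtain ⟨Cu, -, Ru, -, hu⟩ := hu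
  obtain ⟨Cw, -, Rw, -, hw⟩ := hw
  have hH_lim := tendsto_sq_mul_one_sub_of_abs_sub_le (eventually_atTop.2 ⟨RH, hH⟩)
  have ha_lim : TendstoUniformly (fun r ω => r ^ 5 * a r ω) A atTop :=
    tendstoUniformly_pow_mul_of_abs_sub_div_pow_le (by norm_num) (eventually_atTop.2 ⟨Ra, ha⟩)
  have hu_lim : TendstoUniformly (fun r ω => r * u r ω) U atTop :=
    tendstoUniformly_mul_of_abs_sub_div_le (by norm_num) (eventually_atTop.2 ⟨Ru, hu⟩)
  have hw_lim : TendstoUniformly (fun r ω => r * w r ω) W atTop :=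
    tendstoUniformly_mul_of_abs_sub_div_le (by norm_num) (eventually_atTop.2 ⟨Rw, hw⟩)
  have he : Continuous fun ω : S2 => ⟪(ω : E3), e⟫ := by fun_prop
  exact generalized_momentum_charge_limit_general hH_lim ha_lim hu_lim hw_lim
    (eventually_aestronglyMeasurable_sphereMeasure ha_cont)
    (eventually_aestronglyMeasurable_sphereMeasure hu_cont)
    (eventually_aestronglyMeasurable_sphereMeasure hw_cont)
    (integrable_sphereMeasure_of_continuous he)
    (integrable_sphereMeasure_of_continuous (hA.mul he))
    (integrable_sphereMeasure_of_continuous (hU.mul he))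
    (integrable_sphereMeasure_of_continuous (hW.mul he))
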